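/- arXiv:2304.01579 — 2 statements merged into one kernel-verified Lean document; each statement's English description precedes it below -/
import Mathlib

section
/- Let m ≥ 0, n ≥ 1 be integers and μ ∈ ℝ, and set T̂_{m,n}^{(μ)}(z) = T_{m,n}^{(μ)}(−z). Then σ̂_{m,n}(z) = z · (d/dz)T̂_{m,n}^{(μ)}(z) / T̂_{m,n}^{(μ)}(z) − (m+1)n is a solution of S_V with parameters ν = (−m−1, n, −m−n−μ−1), at every z ≠ 0 with T̂_{m,n}^{(μ)}(z) ≠ 0. -/
noncomputable section

open Finset

/-- Generalized binomial coefficient `C(x, k)` for real `x`. -/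
def genBinom (x : ℝ) (k : ℕ) : ℝ :=
  (∏ i ∈ Finset.range k, (x - i)) / (Nat.factorial k)

/-- Associated Laguerre polynomial `L_n^{(α)}(z)`, with the convention `L_n^{(α)} = 0` for `n < 0`. -/
def lagL (n : ℤ) (α : ℝ) : ℝ → ℝ := fun z =>
  if n < 0 then 0
  else ∑ k ∈ Finset.range (n.toNat + 1),
    (-1 : ℝ) ^ k * genBinom ((n : ℝ) + α) (n.toNat - k) * z ^ k / (Nat.factorial k)

/-- Generalised Laguerre polynomial
`T_{m,n}^{(μ)}(z) = det[(d/dz)^{j+k} L_{m+n}^{(μ+1)}(z)]_{j,k=0}^{n-1}`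
(with `T_{m,0}^{(μ)} = 1`, the empty determinant). -/
def genLag (m : ℤ) (n : ℕ) (μ : ℝ) : ℝ → ℝ := fun z =>
  Matrix.det (Matrix.of fun j k : Fin n =>
    iteratedDeriv ((j : ℕ) + (k : ℕ)) (lagL (m + n) (μ + 1)) z)

/-- Wronskian `Wr(f_1, …, f_r)(z) = det[(d/dz)^{j-1} f_k(z)]`. -/
def wronskian {r : ℕ} (f : Fin r → ℝ → ℝ) : ℝ → ℝ := fun z =>
  Matrix.det (Matrix.of fun j k : Fin r => iteratedDeriv (j : ℕ) (f k) z)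

/-- The constant `c_{m,n} = (-1)^{n(2m+1+n)/2} ∏_{j=1}^n (j-1)!/(m+j)!`. -/
def cmn (m n : ℕ) : ℝ :=
  (-1 : ℝ) ^ (n * (2 * m + 1 + n) / 2) *
    ∏ j ∈ Finset.range n, (Nat.factorial j : ℝ) / (Nat.factorial (m + j + 1))

/-- `τ_{m,n}^{(μ)}(z) = det[(z d/dz)^{j+k} L_{m+n}^{(n+μ)}(z)]_{j,k=0}^{n-1}`. -/
def tauP (m : ℤ) (n : ℕ) (μ : ℝ) : ℝ → ℝ := fun z =>
  Matrix.det (Matrix.of fun j k : Fin n =>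
    ((fun (g : ℝ → ℝ) => fun t => t * deriv g t)^[(j : ℕ) + (k : ℕ)]
      (lagL (m + n) ((n : ℝ) + μ))) z)

/-- Hirota bilinear operator `D_z(f • g) = f' g - f g'`. -/
def hirota (f g : ℝ → ℝ) (z : ℝ) : ℝ := deriv f z * g z - f z * deriv g z

/-- Probabilists' Hermite polynomial `He_n` as a real function. -/
def He (n : ℕ) : ℝ → ℝ := fun z => Polynomial.aeval z (Polynomial.hermite n)

/-- The fifth Painlevé equation (with `δ = -1/2`) for `w` with parameters `(a, b, c)`,
holding at the point `z`. -/
def PV (a b c : ℝ) (w : ℝ → ℝ) (z : ℝ) : Prop :=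
  iteratedDeriv 2 w z =
    (1 / (2 * w z) + 1 / (w z - 1)) * (deriv w z) ^ 2
      - (1 / z) * deriv w z
      + (w z - 1) ^ 2 * (a * (w z) ^ 2 + b) / (z ^ 2 * w z)
      + c * w z / z
      - w z * (w z + 1) / (2 * (w z - 1))

/-- The Jimbo–Miwa–Okamoto `σ`-equation `S_V` with parameters `(ν₁, ν₂, ν₃)`,
holding at the point `z`. -/
def SV (ν₁ ν₂ ν₃ : ℝ) (σ : ℝ → ℝ) (z : ℝ) : Prop :=
  (z * iteratedDeriv 2 σ z) ^ 2 =
    (2 * (deriv σ z) ^ 2 + (ν₁ + ν₂ + ν₃ - z) * deriv σ z + σ z) ^ 2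
      - 4 * deriv σ z * (deriv σ z + ν₁) * (deriv σ z + ν₂) * (deriv σ z + ν₃)

/-!
For a function `p` the Hankel determinants `τ_k = det (p⁽ⁱ⁺ʲ⁾)` of size `k` satisfy the Toda
equation `τ_{k+1} τ_{k-1} = τ_k τ_k″ - (τ_k′)²`, an instance of Sylvester's determinant identity.
Consequently the functions `y_k = t τ_k′ / τ_k` determine each other along the chain, and the
equations of Okamoto's Hamiltonian system for the fifth Painlevé equation propagate from `k` to
`k + 1` by a Bäcklund transformation, as soon as no `τ_k` vanishes identically. For a Laguerre
polynomial `p` the chain starts from the Laguerre equation, read as a Riccati equation for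
`t p′ / p`. The non-vanishing of `τ_k` follows from its degree, which the Toda equation computes
recursively. Eliminating the auxiliary coordinate from the Hamiltonian system leaves the `σ`-form
of the equation for `y_n`, and `z = -t` turns it into `S_V`.

These are identities in the differential field of rational functions; cleared of denominators, the
last one descends to polynomials and can be evaluated at a real number.
-/

open Polynomial
open scoped Differential

/-! ### Extending a derivation to a localization -/

section Localization

variable {A : Type*} [CommRing A] [Differential A] (M : Submonoid A)
  (K : Type*) [CommRing K] [Algebra A K] [IsLocalization M K]

/-- The unique extension of the derivation of `A` to the localization `K` of `A` at `M`. It exists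
because `Ω[K⁄ℤ]` is the base change of `Ω[A⁄ℤ]` along the formally étale map `A → K`. -/
abbrev localizationDifferential : Differential K where
  deriv :=
    have := Algebra.FormallyEtale.of_isLocalization (Rₘ := K) M
    ((KaehlerDifferential.isBaseChange_of_formallyEtale ℤ A K).lift
      ((Algebra.linearMap A K).compDer Differential.deriv).liftKaehlerDifferential).compDer
        (KaehlerDifferential.D ℤ K)

theorem differentialAlgebra_localizationDifferential :
    letI := localizationDifferential M K
    DifferentialAlgebra A K :=
  letI := localizationDifferential M K
  { deriv_algebraMap a := by
      have := Algebra.FormallyEtale.of_isLocalization (Rₘ := K) M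
      have lift_eq := (KaehlerDifferential.isBaseChange_of_formallyEtale ℤ A K).lift_eq
        ((Algebra.linearMap A K).compDer Differential.deriv).liftKaehlerDifferential
        (KaehlerDifferential.D ℤ A a)
      simp only [KaehlerDifferential.map_D, Derivation.liftKaehlerDifferential_comp_D,
        Derivation.coe_comp, LinearMap.coe_comp, LinearMap.coe_restrictScalars,
        Derivation.coeFn_coe, Function.comp_apply, Algebra.linearMap_apply] at lift_eq
      exact lift_eq }

end Localization

/-- Formal differentiation makes a polynomial ring a differential ring. -/
instance polynomialDifferential {R : Type*} [CommRing R] : Differential R[X] where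
  deriv := derivative'.restrictScalars ℤ

theorem differential_eq_derivative {R : Type*} [CommRing R] (p : R[X]) : p′ = derivative p := rfl

/-- Formal differentiation of rational functions. -/
instance fractionRingDifferential (F : Type*) [Field F] : Differential (FractionRing F[X]) :=
  localizationDifferential (nonZeroDivisors F[X]) _

instance fractionRingDifferentialAlgebra (F : Type*) [Field F] :
    DifferentialAlgebra F[X] (FractionRing F[X]) :=
  differentialAlgebra_localizationDifferential (nonZeroDivisors F[X]) _

/-! ### Hankel determinants in a differential ring -/

section HankelDeterminant

variable {R ι : Type*} [CommRing R] [Differential R]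

theorem differential_ofNat (n : ℕ) [n.AtLeastTwo] : (ofNat(n) : R)′ = 0 :=
  Derivation.map_natCast _ n

theorem differential_prod [DecidableEq ι] (s : Finset ι) (f : ι → R) :
    (∏ i ∈ s, f i)′ = ∑ i ∈ s, (∏ j ∈ s.erase i, f j) * (f i)′ := by
  induction s using Finset.induction_on with
  | empty => simp
  | insert a s ha ih =>
    have prod_erase_insert : ∀ i ∈ s,
        ∏ j ∈ (insert a s).erase i, f j = f a * ∏ j ∈ s.erase i, f j := fun i hi => by
      rw [erase_insert_of_ne (ne_of_mem_of_not_mem hi ha).symm, prod_insert (by simp [ha])]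
    rw [prod_insert ha, Derivation.leibniz, ih, sum_insert ha, erase_insert ha, add_comm,
      smul_eq_mul, smul_eq_mul, mul_sum]
    congr 1
    exact sum_congr rfl fun i hi => by rw [prod_erase_insert i hi, mul_assoc]

section Det

variable [Fintype ι] [DecidableEq ι]

theorem differential_det (M : Matrix ι ι R) :
    M.det′ = ∑ j, (M.updateCol j fun i => (M i j)′).det := by
  simp only [Matrix.det_apply, Units.smul_def, map_sum, map_zsmul, differential_prod]
  rw [sum_comm]
  refine sum_congr rfl fun g _ => ?_
  rw [smul_sum]
  refine sum_congr rfl fun j _ => ?_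
  rw [← prod_erase_mul _ _ (mem_univ j), Matrix.updateCol_self]
  congr 2
  exact prod_congr rfl fun i hi => (Matrix.updateCol_ne (ne_of_mem_erase hi)).symm

/-- The minor of the infinite Hankel matrix `(p⁽ⁱ⁺ʲ⁾)` with rows `r` and columns `c`. -/
def hankelMinor (p : R) (r c : ι → ℕ) : R :=
  (Matrix.of fun i j => Differential.deriv^[r i + c j] p).det

variable (p : R) (r c : ι → ℕ)

theorem hankelMinor_comm : hankelMinor p r c = hankelMinor p c r := by
  rw [hankelMinor, ← Matrix.det_transpose]
  simp only [hankelMinor, Matrix.transpose, Matrix.of_apply, add_comm]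

theorem hankelMinor_comp_equiv {κ : Type*} [Fintype κ] [DecidableEq κ] (e : κ ≃ ι) :
    hankelMinor p (r ∘ e) (c ∘ e) = hankelMinor p r c :=
  Matrix.det_submatrix_equiv_self e (Matrix.of fun i j => Differential.deriv^[r i + c j] p)

variable {c} in
theorem hankelMinor_eq_zero_of_not_injective (hc : ¬ c.Injective) : hankelMinor p r c = 0 := by
  obtain ⟨i, j, hij, hne⟩ := Function.not_injective_iff.mp hc
  exact Matrix.det_zero_of_column_eq hne fun l => by simp [hij]

theorem differential_hankelMinor :
    (hankelMinor p r c)′ = ∑ j, hankelMinor p r (Function.update c j (c j + 1)) := by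
  rw [hankelMinor, differential_det]
  refine sum_congr rfl fun j _ => congrArg Matrix.det ?_
  ext i l
  obtain rfl | hl := eq_or_ne l j
  · simp [← add_assoc, Function.iterate_succ_apply']
  · simp [hl]

end Det

/-- The `n × n` Hankel determinant `det (p⁽ⁱ⁺ʲ⁾)` of the derivatives of `p`. -/
def hankelDet (p : R) (n : ℕ) : R :=
  hankelMinor p (Fin.val : Fin n → ℕ) Fin.val

/-- The `k × k` Hankel determinant of `p` bordered by the row `a` and the column `b` of the infinite
Hankel matrix. -/
def borderedHankel (p : R) (k a b : ℕ) : R :=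
  hankelMinor p (Sum.elim (Fin.val : Fin k → ℕ) fun _ : Fin 1 => a) (Sum.elim Fin.val fun _ => b)

variable (p : R) (k a b : ℕ)

theorem hankelDet_algebraMap {S : Type*} [CommRing S] [Differential S] [Algebra R S]
    [DifferentialAlgebra R S] :
    hankelDet (algebraMap R S p) k = algebraMap R S (hankelDet p k) := by
  have iterate_algebraMap (i : ℕ) : Differential.deriv^[i] (algebraMap R S p) =
      algebraMap R S (Differential.deriv^[i] p) := by
    induction i with
    | zero => rfl
    | succ i ih => simp only [Function.iterate_succ_apply', ih, deriv_algebraMap]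
  rw [hankelDet, hankelDet, hankelMinor, hankelMinor, RingHom.map_det]
  congr 1
  ext i j
  exact iterate_algebraMap _

@[simp]
theorem hankelDet_zero : hankelDet p 0 = 1 := Matrix.det_isEmpty

@[simp]
theorem hankelDet_one : hankelDet p 1 = p := by
  simp [hankelDet, hankelMinor]

theorem hankelDet_add (q : ℕ) :
    hankelDet p (k + q) =
      hankelMinor p (Sum.elim (Fin.val : Fin k → ℕ) fun i : Fin q => k + i)
        (Sum.elim Fin.val fun i => k + i) := by
  rw [hankelDet, ← hankelMinor_comp_equiv p _ _ finSumFinEquiv]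
  congr 1 <;> (ext (i | i) <;> simp)

theorem hankelDet_succ : hankelDet p (k + 1) = borderedHankel p k k k := by
  simp [hankelDet_add, borderedHankel]

theorem borderedHankel_comm : borderedHankel p k a b = borderedHankel p k b a :=
  hankelMinor_comm ..

-- Differentiating any column but the last one reproduces the next column.
theorem differential_borderedHankel :
    (borderedHankel p k a k)′ = borderedHankel p k a (k + 1) := by
  rw [borderedHankel, differential_hankelMinor, Fintype.sum_sum_type, sum_eq_zero, zero_add]
  · have update_last : Function.update (Sum.elim (Fin.val : Fin k → ℕ) fun _ : Fin 1 => k)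
        (.inr 0) (k + 1) = Sum.elim Fin.val fun _ => k + 1 := by
      ext (i | i)
      · simp
      · obtain rfl := Subsingleton.elim i 0
        simp
    rw [Fin.sum_univ_one, Sum.elim_inr, update_last, borderedHankel]
  · intro i _
    refine hankelMinor_eq_zero_of_not_injective p _ fun hinj => ?_
    obtain hi | hi := Nat.lt_or_ge (i + 1) k
    · have := @hinj (.inl i) (.inl ⟨i + 1, hi⟩) (by simp [Function.update, Fin.ext_iff])
      simp [Fin.ext_iff] at this
    · have update_eq : (i : ℕ) + 1 = k := by omega
      have := @hinj (.inl i) (.inr 0) (by simpa using update_eq)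
      simp at this

theorem differential_hankelDet : (hankelDet p (k + 1))′ = borderedHankel p k k (k + 1) := by
  rw [hankelDet_succ, differential_borderedHankel]

theorem differential_differential_hankelDet :
    (hankelDet p (k + 1))′′ = borderedHankel p k (k + 1) (k + 1) := by
  rw [differential_hankelDet, borderedHankel_comm, differential_borderedHankel]

end HankelDeterminant

/-- **Sylvester's determinant identity** for two extra rows and columns. -/
theorem det_mul_det_toBlocks₁₁ {R n : Type*} [CommRing R] [Fintype n] [DecidableEq n]
    (M : Matrix (n ⊕ Fin 2) (n ⊕ Fin 2) R) (h : IsUnit M.toBlocks₁₁.det) :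
    let minor (i j : Fin 2) : R :=
      (M.submatrix (Sum.map id fun _ : Fin 1 => i) (Sum.map id fun _ : Fin 1 => j)).det
    M.det * M.toBlocks₁₁.det = minor 0 0 * minor 1 1 - minor 0 1 * minor 1 0 := by
  have := Matrix.invertibleOfIsUnitDet _ h
  set S := M.toBlocks₂₂ - M.toBlocks₂₁ * ⅟M.toBlocks₁₁ * M.toBlocks₁₂
  have minor_eq (i j : Fin 2) : (M.submatrix (Sum.map id fun _ : Fin 1 => i)
      (Sum.map id fun _ : Fin 1 => j)).det = M.toBlocks₁₁.det * S i j := by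
    have blocks : M.submatrix (Sum.map id fun _ : Fin 1 => i) (Sum.map id fun _ : Fin 1 => j) =
        Matrix.fromBlocks M.toBlocks₁₁ (M.toBlocks₁₂.submatrix id fun _ => j)
          (M.toBlocks₂₁.submatrix (fun _ => i) id)
          (M.toBlocks₂₂.submatrix (fun _ => i) fun _ => j) := by
      ext (a | a) (b | b) <;> rfl
    rw [blocks, Matrix.det_fromBlocks₁₁, Matrix.det_fin_one]
    rfl
  have det_eq : M.det = M.toBlocks₁₁.det * S.det := by
    conv_lhs => rw [← Matrix.fromBlocks_toBlocks M, Matrix.det_fromBlocks₁₁]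
  simp only [minor_eq, det_eq, Matrix.det_fin_two]
  ring

theorem hankelDet_toda {K : Type*} [Field K] [Differential K] (p : K) (k : ℕ)
    (h : hankelDet p k ≠ 0) :
    hankelDet p (k + 2) * hankelDet p k =
      hankelDet p (k + 1) * (hankelDet p (k + 1))′′ - (hankelDet p (k + 1))′ ^ 2 := by
  set r : Fin k ⊕ Fin 2 → ℕ := Sum.elim Fin.val fun i => k + i
  set M := Matrix.of fun i j => Differential.deriv^[r i + r j] p
  have minor_eq (i j : Fin 2) : (M.submatrix (Sum.map id fun _ : Fin 1 => i)
      (Sum.map id fun _ : Fin 1 => j)).det = borderedHankel p k (k + i) (k + j) := by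
    rw [borderedHankel, hankelMinor]
    congr 1
    ext (a | a) (b | b) <;> rfl
  have sylvester := det_mul_det_toBlocks₁₁ M h.isUnit
  simp only [minor_eq, Fin.val_zero, Fin.val_one, add_zero] at sylvester
  rw [differential_differential_hankelDet, differential_hankelDet, hankelDet_add p k 2,
    hankelDet_succ, sq]
  nth_rewrite 4 [borderedHankel_comm]
  exact sylvester

/-! ### Hankel determinants of polynomials -/

section PolynomialHankelDeterminant

variable {F : Type*} [Field F]

theorem hankelDet_toda_polynomial (p : F[X]) (k : ℕ) (h : hankelDet p k ≠ 0) :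
    hankelDet p (k + 2) * hankelDet p k =
      hankelDet p (k + 1) * (hankelDet p (k + 1))′′ - (hankelDet p (k + 1))′ ^ 2 := by
  have algebraMap_injective := FaithfulSMul.algebraMap_injective F[X] (FractionRing F[X])
  apply algebraMap_injective
  have := hankelDet_toda (algebraMap F[X] (FractionRing F[X]) p) k (by
    rwa [hankelDet_algebraMap, Ne, map_eq_zero_iff _ algebraMap_injective])
  simpa only [hankelDet_algebraMap, deriv_algebraMap, ← map_mul, ← map_pow, ← map_sub] using this

theorem coeff_mul_derivative_derivative_sub (p : F[X]) {e : ℕ} (he : p.natDegree = e + 1) :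
    (p * derivative (derivative p) - derivative p ^ 2).coeff (2 * e) =
      -(e + 1) * p.leadingCoeff ^ 2 := by
  have natDegree_derivative : (derivative p).natDegree ≤ e := by
    simpa [he] using natDegree_derivative_le p
  have natDegree_X_mul : (X * derivative (derivative p)).natDegree ≤ e := by
    obtain h | h := Nat.eq_zero_or_pos (derivative p).natDegree
    · simp [derivative_of_natDegree_zero h]
    · have := natDegree_derivative_lt h.ne'
      exact (natDegree_mul_le_of_le natDegree_X_le le_rfl).trans (by omega)
  have coeff_X_mul_derivative : (X * derivative (derivative p)).coeff e =
      e * (e + 1) * p.leadingCoeff := by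
    cases e with
    | zero => simp
    | succ e =>
      simp only [coeff_X_mul, coeff_derivative, leadingCoeff, he]
      push_cast
      ring
  have coeff_mul := coeff_mul_add_eq_of_natDegree_le he.le natDegree_X_mul
  have coeff_sq := coeff_mul_add_eq_of_natDegree_le natDegree_derivative natDegree_derivative
  rw [coeff_X_mul_derivative, mul_left_comm, show e + 1 + e = 2 * e + 1 by ring, coeff_X_mul, ← he,
    coeff_natDegree] at coeff_mul
  rw [coeff_derivative, ← he, coeff_natDegree, ← two_mul] at coeff_sq
  rw [coeff_sub, sq, coeff_mul, coeff_sq]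
  ring

theorem natDegree_mul_derivative_derivative_sub_le (p : F[X]) {e : ℕ} (he : p.natDegree = e + 1) :
    (p * derivative (derivative p) - derivative p ^ 2).natDegree ≤ 2 * e := by
  have natDegree_derivative : (derivative p).natDegree ≤ e := by
    simpa [he] using natDegree_derivative_le p
  refine (natDegree_sub_le_of_le ?_ (natDegree_pow_le_of_le 2 natDegree_derivative)).trans_eq
    (max_self _)
  obtain h | h := Nat.eq_zero_or_pos (derivative p).natDegree
  · simp [derivative_of_natDegree_zero h]
  · have := natDegree_derivative_lt h.ne'
    exact (natDegree_mul_le_of_le he.le le_rfl).trans (by omega)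

variable [CharZero F]

theorem hankelDet_ne_zero_and_natDegree {p : F[X]} (hp : p ≠ 0) (k : ℕ)
    (hk : k ≤ p.natDegree + 1) :
    hankelDet p k ≠ 0 ∧ (hankelDet p k).natDegree = k * (p.natDegree + 1 - k) := by
  induction k using Nat.twoStepInduction with
  | zero => simp
  | one => simpa
  | more k ih ih₁ =>
    obtain ⟨hne, hdeg⟩ := ih (by omega)
    obtain ⟨hne₁, hdeg₁⟩ := ih₁ (by omega)
    obtain ⟨N, hN⟩ := Nat.exists_eq_add_of_le hk
    obtain ⟨e, he⟩ : ∃ e, (k + 1) * (N + 1) = e + 1 := ⟨_, (Nat.succ_pred (by positivity)).symm⟩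
    have natDegree_eq : (hankelDet p (k + 1)).natDegree = e + 1 := by
      rw [hdeg₁, hN, ← he]
      congr 1
      omega
    have toda := hankelDet_toda_polynomial p k hne
    have coeff_ne_zero : (hankelDet p (k + 2) * hankelDet p k).coeff (2 * e) ≠ 0 := by
      rw [toda]
      refine (coeff_mul_derivative_derivative_sub _ natDegree_eq).trans_ne ?_
      exact mul_ne_zero (neg_ne_zero.mpr e.cast_add_one_ne_zero)
        (pow_ne_zero 2 (leadingCoeff_ne_zero.mpr hne₁))
    have hne₂ : hankelDet p (k + 2) ≠ 0 := fun h => coeff_ne_zero (by simp [h])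
    have natDegree_mul_eq :
        (hankelDet p (k + 2)).natDegree + (hankelDet p k).natDegree = 2 * e := by
      rw [← natDegree_mul hne₂ hne]
      refine le_antisymm ?_ (le_natDegree_of_ne_zero coeff_ne_zero)
      rw [toda]
      exact natDegree_mul_derivative_derivative_sub_le _ natDegree_eq
    refine ⟨hne₂, ?_⟩
    rw [hdeg, hN, show k + 2 + N - k = N + 2 by omega] at natDegree_mul_eq
    rw [hN, Nat.add_sub_cancel_left]
    linarith

end PolynomialHankelDeterminant

/-! ### Okamoto's Hamiltonian system -/

/-- Okamoto's Hamiltonian form of the fifth Painlevé equation, as a system in the time `t` for the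
Hamiltonian function `y` and an auxiliary coordinate `w`, with parameters `ν`, `c`, `d`. The phase
space has coordinates `(w, y′)`: `hamiltonian` determines `y` from them, the other two fields are
the equations of motion. -/
structure OkamotoSystem {R : Type*} [CommRing R] [Differential R] (t ν c d y w : R) : Prop where
  deriv_deriv : t * (t * y′′) =
    2 * (t * y′ - y) * w + t * ((1 - c) * y′ - d - (t * y′ - y))
  hamiltonian : (t * y′ - y) * w * (w - t) + t * w * ((1 - c) * y′ - d) +
    t ^ 2 * (y′ * (y′ + ν)) = 0
  riccati : t * w′ = (c + t) * w - w ^ 2 - (2 * y′ + ν) * t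

namespace OkamotoSystem

variable {R : Type*} [CommRing R] [Differential R] {t ν c d y w y₁ w₁ : R}

theorem deriv_riccati (h : OkamotoSystem t ν c d y w) (ht : t′ = 1) (hν : ν′ = 0) (hc : c′ = 0) :
    w′ + t * w′′ = w + (c + t) * w′ - 2 * w * w′ - 2 * y′′ * t - (2 * y′ + ν) := by
  have := congrArg Differential.deriv h.riccati
  simp only [Derivation.leibniz, Derivation.leibniz_pow, map_add, map_sub, smul_eq_mul, ht, hν, hc,
    differential_ofNat, nsmul_eq_mul] at this
  push_cast at this
  linear_combination this

theorem deriv_deriv_reflected (h : OkamotoSystem t ν c d y w) (ht : t′ = 1) (hν : ν′ = 0)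
    (hc : c′ = 0) (hy₁ : y₁ = y + w - c) :
    t * (t * y₁′′) = -2 * (t * y₁′ - y₁) * w -
      t * ((1 - (c + 2)) * y₁′ - (d + ν - c) - (t * y₁′ - y₁)) := by
  simp only [hy₁, map_add, map_sub, hc, sub_zero]
  linear_combination -h.deriv_deriv + t * h.deriv_riccati ht hν hc - 2 * h.riccati

theorem hamiltonian_reflected (h : OkamotoSystem t ν c d y w) (hc : c′ = 0)
    (hy₁ : y₁ = y + w - c) :
    (t * y₁′ - y₁) * w * (w - t) + t * w * ((1 - (c + 2)) * y₁′ - (d + ν - c)) +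
      t ^ 2 * (y₁′ * (y₁′ + ν)) = 0 := by
  simp only [hy₁, map_add, map_sub, hc, sub_zero]
  linear_combination h.hamiltonian + (t * w′ - w) * h.riccati

theorem sum_relation (h : OkamotoSystem t ν c d y w) (ht : t′ = 1) (hν : ν′ = 0)
    (hc : c′ = 0) (hy₁ : y₁ = y + w - c) (toda : t * (t * y₁′′) = (t * y₁′ - y₁) * (w₁ - w)) :
    (t * y₁′ - y₁) * (w₁ + w - t) = -t * ((1 - (c + 2)) * y₁′ - (d + ν - c)) := by
  linear_combination h.deriv_deriv_reflected ht hν hc hy₁ - toda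

theorem deriv_sum_relation (h : OkamotoSystem t ν c d y w) (ht : t′ = 1) (hν : ν′ = 0)
    (hc : c′ = 0) (hd : d′ = 0) (hy₁ : y₁ = y + w - c)
    (toda : t * (t * y₁′′) = (t * y₁′ - y₁) * (w₁ - w)) :
    t * y₁′′ * (w₁ + w - t) + (t * y₁′ - y₁) * (w₁′ + w′ - 1) =
      -((1 - (c + 2)) * y₁′ - (d + ν - c)) - t * ((1 - (c + 2)) * y₁′′) := by
  have := congrArg Differential.deriv (h.sum_relation ht hν hc hy₁ toda)
  simp only [Derivation.leibniz, map_add, map_sub, map_neg, smul_eq_mul, ht, hν, hc, hd,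
    differential_ofNat, Derivation.map_one_eq_zero] at this
  linear_combination this

section IsDomain

variable [IsDomain R]

-- The Bäcklund transformation along the Toda chain.
theorem succ (h : OkamotoSystem t ν c d y w) (ht : t′ = 1) (hν : ν′ = 0)
    (hc : c′ = 0) (hd : d′ = 0) (hy₁ : y₁ = y + w - c) (hx : t * y₁′ - y₁ ≠ 0)
    (toda : t * (t * y₁′′) = (t * y₁′ - y₁) * (w₁ - w)) :
    OkamotoSystem t ν (c + 2) (d + ν - c) y₁ w₁ where
  deriv_deriv := by linear_combination toda - h.sum_relation ht hν hc hy₁ toda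
  hamiltonian := by
    linear_combination h.hamiltonian_reflected hc hy₁ +
      (w₁ - w) * h.sum_relation ht hν hc hy₁ toda
  riccati := by
    have hy₁' : y₁′ = y′ + w′ := by simp [hy₁, hc]
    apply mul_left_cancel₀ hx
    linear_combination t * h.deriv_sum_relation ht hν hc hd hy₁ toda -
      (w₁ + w - t) * toda - h.sum_relation ht hν hc hy₁ toda - (1 - (c + 2)) * toda +
      (t * y₁′ - y₁) * h.riccati + 2 * t * (t * y₁′ - y₁) * hy₁'

theorem sigma_equation (h : OkamotoSystem t ν c d y w) (ht : t ≠ 0) :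
    (t * y′′) ^ 2 = ((1 - c) * y′ - d - (t * y′ - y)) ^ 2 -
      4 * (t * y′ - y) * (y′ * (y′ + ν)) := by
  apply mul_left_cancel₀ (pow_ne_zero 2 ht)
  linear_combination (t * (t * y′′) + (2 * (t * y′ - y) * w +
    t * ((1 - c) * y′ - d - (t * y′ - y)))) * h.deriv_deriv + 4 * (t * y′ - y) * h.hamiltonian

end IsDomain

end OkamotoSystem

/-! ### Toda chains and the system -/

section EulerLogDeriv

variable {K : Type*} [Field K] [Differential K]

/-- The logarithmic derivative of `τ` with respect to the Euler derivation `t d/dt`. -/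
def eulerLogDeriv (t τ : K) : K := t * Differential.logDeriv τ

variable {t a b c : K}

theorem ne_zero_of_differential_eq_one (ht : t′ = 1) : t ≠ 0 := by
  rintro rfl
  simp at ht

theorem differential_logDeriv (hb : b ≠ 0) :
    (Differential.logDeriv b)′ = (b * b′′ - b′ ^ 2) / b ^ 2 := by
  rw [Differential.logDeriv, Derivation.leibniz_div]
  simp only [smul_eq_mul]
  field_simp

theorem mul_differential_eulerLogDeriv_sub (hb : b ≠ 0) (ht : t′ = 1)
    (toda : c * a = b * b′′ - b′ ^ 2) :
    t * (eulerLogDeriv t b)′ - eulerLogDeriv t b = t ^ 2 * (c * a) / b ^ 2 := by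
  rw [eulerLogDeriv, Derivation.leibniz, ht, differential_logDeriv hb, ← toda]
  simp only [smul_eq_mul]
  ring

theorem eulerLogDeriv_toda (ha : a ≠ 0) (hb : b ≠ 0) (hc : c ≠ 0) (ht : t′ = 1)
    (toda : c * a = b * b′′ - b′ ^ 2) :
    t * (t * (eulerLogDeriv t b)′′) = (t * (eulerLogDeriv t b)′ - eulerLogDeriv t b) *
      (2 + eulerLogDeriv t c + eulerLogDeriv t a - 2 * eulerLogDeriv t b) := by
  have t_ne_zero := ne_zero_of_differential_eq_one ht
  set x := t * (eulerLogDeriv t b)′ - eulerLogDeriv t b with hx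
  have differential_x : x′ = t * (eulerLogDeriv t b)′′ := by simp [hx, Derivation.leibniz, ht]
  have x_eq : x = t ^ 2 * (c * a) / b ^ 2 := mul_differential_eulerLogDeriv_sub hb ht toda
  have numerator_ne_zero : t ^ 2 * (c * a) ≠ 0 :=
    mul_ne_zero (pow_ne_zero 2 t_ne_zero) (mul_ne_zero hc ha)
  have x_ne_zero : x ≠ 0 := by
    rw [x_eq]
    exact div_ne_zero numerator_ne_zero (pow_ne_zero 2 hb)
  have logDeriv_x : Differential.logDeriv x = 2 * Differential.logDeriv t +
      (Differential.logDeriv c + Differential.logDeriv a) - 2 * Differential.logDeriv b := by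
    rw [x_eq, Differential.logDeriv_div _ _ numerator_ne_zero (pow_ne_zero 2 hb),
      Differential.logDeriv_mul _ _ (pow_ne_zero 2 t_ne_zero) (mul_ne_zero hc ha),
      Differential.logDeriv_mul _ _ hc ha, Differential.logDeriv_pow, Differential.logDeriv_pow]
    norm_num
  have mul_logDeriv_t : t * Differential.logDeriv t = 1 := by
    rw [Differential.logDeriv, ht, mul_one_div_cancel t_ne_zero]
  have differential_eq : x′ = x * Differential.logDeriv x := (mul_div_cancel₀ _ x_ne_zero).symm
  rw [← differential_x, differential_eq, logDeriv_x]
  simp only [eulerLogDeriv]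
  linear_combination 2 * x * mul_logDeriv_t

-- The Riccati equation for the logarithmic derivative of `p` is the Laguerre equation.
theorem okamotoSystem_laguerre {p N α : K} (hp : p ≠ 0) (ht : t′ = 1) (hα : α′ = 0)
    (laguerre : t * p′′ + (α + 1 - t) * p′ + N * p = 0) :
    OkamotoSystem t (N + α) α 0 0 (eulerLogDeriv t p + α) where
  deriv_deriv := by simp
  hamiltonian := by simp
  riccati := by
    rw [map_add, hα, map_zero, eulerLogDeriv, Derivation.leibniz, differential_logDeriv hp, ht,
      smul_eq_mul, smul_eq_mul, Differential.logDeriv]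
    field_simp
    linear_combination t * p * laguerre

theorem okamotoSystem_hankelDet {p N α : K} (ht : t′ = 1) (hN : N′ = 0) (hα : α′ = 0)
    (laguerre : t * p′′ + (α + 1 - t) * p′ + N * p = 0) (n : ℕ)
    (hp : ∀ k ≤ n + 1, hankelDet p k ≠ 0) :
    OkamotoSystem t (N + α) (α + 2 * n) (n * (N + 1 - n)) (eulerLogDeriv t (hankelDet p n))
      (eulerLogDeriv t (hankelDet p (n + 1)) - eulerLogDeriv t (hankelDet p n) + α + 2 * n) := by
  induction n with
  | zero =>
    have p_ne_zero : p ≠ 0 := by simpa using hp 1 le_rfl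
    simpa [eulerLogDeriv] using okamotoSystem_laguerre p_ne_zero ht hα laguerre
  | succ n ih =>
    have toda := hankelDet_toda p n (hp n (by omega))
    have ha := hp n (by omega)
    have hb := hp (n + 1) (by omega)
    have hc := hp (n + 2) (by omega)
    have x_ne_zero : t * (eulerLogDeriv t (hankelDet p (n + 1)))′ -
        eulerLogDeriv t (hankelDet p (n + 1)) ≠ 0 := by
      rw [mul_differential_eulerLogDeriv_sub hb ht toda]
      exact div_ne_zero (mul_ne_zero (pow_ne_zero 2 (ne_zero_of_differential_eq_one ht))
        (mul_ne_zero hc ha)) (pow_ne_zero 2 hb)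
    have system := (ih fun k hk => hp k (by omega)).succ
      (w₁ := eulerLogDeriv t (hankelDet p (n + 2)) - eulerLogDeriv t (hankelDet p (n + 1)) +
        α + 2 * (n + 1)) ht
      (by simp [hN, hα])
      (by simp [hα, Derivation.leibniz, differential_ofNat])
      (by simp [hN, Derivation.leibniz])
      (by ring) x_ne_zero
      (by
        rw [eulerLogDeriv_toda ha hb hc ht toda]
        ring)
    convert system using 1 <;> push_cast <;> ring

end EulerLogDeriv

/-! ### The `σ`-equation in terms of `τ`-functions -/

section TauForm

section Ring

variable {R : Type*} [CommRing R] [Differential R]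

/-- The numerator of `(t τ′ / τ)′` over `τ ^ 2`. -/
def sigmaNum₁ (t τ : R) : R := τ * τ′ + t * (τ * τ′′ - τ′ ^ 2)

/-- The numerator of `(t τ′ / τ)′′` over `τ ^ 3`. -/
def sigmaNum₂ (t τ : R) : R := τ * (sigmaNum₁ t τ)′ - 2 * τ′ * sigmaNum₁ t τ

/-- The equation, cleared of its denominator `τ ^ 6`, that `y = t τ′ / τ` satisfies when
`z ↦ y (-z) + a₁ a₂` solves `S_V` with parameters `(-a₁, -a₂, -a₃)`. -/
def TauForm (t a₁ a₂ a₃ τ : R) : Prop :=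
  (t * sigmaNum₂ t τ) ^ 2 =
    τ ^ 2 * ((a₁ + a₂ - a₃) * sigmaNum₁ t τ + a₁ * a₂ * τ ^ 2 -
      t * (sigmaNum₁ t τ - τ * τ′)) ^ 2 -
    4 * (t * (sigmaNum₁ t τ - τ * τ′)) * sigmaNum₁ t τ * (sigmaNum₁ t τ + a₃ * τ ^ 2)

section AlgebraMap

variable {S : Type*} [CommRing S] [Differential S] [Algebra R S] [DifferentialAlgebra R S]

theorem sigmaNum₁_algebraMap (t τ : R) :
    sigmaNum₁ (algebraMap R S t) (algebraMap R S τ) = algebraMap R S (sigmaNum₁ t τ) := by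
  simp only [sigmaNum₁, map_add, map_sub, map_mul, map_pow, deriv_algebraMap]

theorem sigmaNum₂_algebraMap (t τ : R) :
    sigmaNum₂ (algebraMap R S t) (algebraMap R S τ) = algebraMap R S (sigmaNum₂ t τ) := by
  simp only [sigmaNum₂, sigmaNum₁_algebraMap, map_sub, map_mul, map_ofNat, deriv_algebraMap]

theorem tauForm_algebraMap_iff (h : Function.Injective (algebraMap R S)) {t a₁ a₂ a₃ τ : R} :
    TauForm (algebraMap R S t) (algebraMap R S a₁) (algebraMap R S a₂) (algebraMap R S a₃)
      (algebraMap R S τ) ↔ TauForm t a₁ a₂ a₃ τ := by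
  rw [TauForm, TauForm, ← h.eq_iff]
  simp only [sigmaNum₁_algebraMap, sigmaNum₂_algebraMap, map_add, map_sub, map_mul, map_pow,
    map_ofNat, deriv_algebraMap]

end AlgebraMap

end Ring

variable {K : Type*} [Field K] [Differential K] {t τ : K}

theorem differential_eulerLogDeriv (hτ : τ ≠ 0) (ht : t′ = 1) :
    (eulerLogDeriv t τ)′ = sigmaNum₁ t τ / τ ^ 2 := by
  rw [eulerLogDeriv, Derivation.leibniz, ht, differential_logDeriv hτ, sigmaNum₁,
    Differential.logDeriv, smul_eq_mul, smul_eq_mul]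
  field_simp
  ring

theorem differential_differential_eulerLogDeriv (hτ : τ ≠ 0) (ht : t′ = 1) :
    (eulerLogDeriv t τ)′′ = sigmaNum₂ t τ / τ ^ 3 := by
  rw [differential_eulerLogDeriv hτ ht, Derivation.leibniz_div, Derivation.leibniz_pow, sigmaNum₂]
  simp only [smul_eq_mul, nsmul_eq_mul]
  field_simp
  push_cast
  ring

theorem OkamotoSystem.tauForm {a₁ a₂ a₃ c d w : K}
    (h : OkamotoSystem t a₃ c d (eulerLogDeriv t τ) w) (hτ : τ ≠ 0) (ht : t′ = 1)
    (hc : c = 1 - (a₁ + a₂ - a₃)) (hd : d = -(a₁ * a₂)) :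
    TauForm t a₁ a₂ a₃ τ := by
  subst hc hd
  have t_ne_zero := ne_zero_of_differential_eq_one ht
  have sigma := h.sigma_equation t_ne_zero
  rw [differential_differential_eulerLogDeriv hτ ht, differential_eulerLogDeriv hτ ht,
    eulerLogDeriv, Differential.logDeriv] at sigma
  field_simp at sigma
  rw [TauForm]
  linear_combination sigma

theorem tauForm_hankelDet {F : Type*} [Field F] [CharZero F] {p : F[X]} {α N : F} {n : ℕ}
    (hp : p ≠ 0) (hn : n ≤ p.natDegree)
    (laguerre : X * p′′ + (C α + 1 - X) * p′ + C N * p = 0) :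
    TauForm X (C (N + 1 - n)) (C (-n)) (C (N + α)) (hankelDet p n) := by
  set φ := algebraMap F[X] (FractionRing F[X])
  have φ_injective : Function.Injective φ := FaithfulSMul.algebraMap_injective _ _
  have differential_φ (q : F[X]) : (φ q)′ = φ q′ := deriv_algebraMap q
  have differential_X : (φ X)′ = 1 := by
    rw [differential_φ, differential_eq_derivative, derivative_X, map_one]
  have differential_C (a : F) : (φ (C a))′ = 0 := by
    rw [differential_φ, differential_eq_derivative, derivative_C, map_zero]
  have hankelDet_φ (k : ℕ) : hankelDet (φ p) k = φ (hankelDet p k) := hankelDet_algebraMap p k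
  have hankelDet_φ_ne_zero : ∀ k ≤ n + 1, hankelDet (φ p) k ≠ 0 := fun k hk => by
    rw [hankelDet_φ, Ne, map_eq_zero_iff φ φ_injective]
    exact (hankelDet_ne_zero_and_natDegree hp k (by omega)).1
  have laguerre_φ := congrArg φ laguerre
  simp only [map_add, map_sub, map_mul, map_one, map_zero, ← differential_φ] at laguerre_φ
  have system := okamotoSystem_hankelDet differential_X (differential_C N) (differential_C α)
    laguerre_φ n hankelDet_φ_ne_zero
  have tau : TauForm (φ X) (φ (C (N + 1 - n))) (φ (C (-n))) (φ (C (N + α)))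
      (φ (hankelDet p n)) := by
    rw [← hankelDet_φ, C_add, map_add]
    refine system.tauForm (hankelDet_φ_ne_zero n n.le_succ) differential_X ?_ ?_ <;>
    · simp only [map_add, map_sub, map_neg, map_one, map_natCast]
      ring
  exact (tauForm_algebraMap_iff φ_injective).mp tau

end TauForm

section Real

variable (T : ℝ[X])

theorem hasDerivAt_mul_derivative_div {x : ℝ} (hx : T.eval x ≠ 0) :
    HasDerivAt (fun s => s * (derivative T).eval s / T.eval s)
      ((sigmaNum₁ X T).eval x / T.eval x ^ 2) x := by
  refine (((hasDerivAt_id x).mul ((derivative T).hasDerivAt x)).div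
    (T.hasDerivAt x) hx).congr_deriv ?_
  simp only [sigmaNum₁, differential_eq_derivative, eval_add, eval_sub, eval_mul, eval_pow, eval_X,
    id, Pi.mul_apply]
  ring

theorem hasDerivAt_sigmaNum₁_div {x : ℝ} (hx : T.eval x ≠ 0) :
    HasDerivAt (fun s => (sigmaNum₁ X T).eval s / T.eval s ^ 2)
      ((sigmaNum₂ X T).eval x / T.eval x ^ 3) x := by
  refine (((sigmaNum₁ X T).hasDerivAt x).div ((T.hasDerivAt x).pow 2)
    (pow_ne_zero 2 hx)).congr_deriv ?_
  simp only [sigmaNum₂, differential_eq_derivative, eval_sub, eval_mul, eval_ofNat, Pi.pow_apply]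
  field_simp
  push_cast
  ring

theorem TauForm.sv {T : ℝ[X]} {a₁ a₂ a₃ z : ℝ} (h : TauForm X (C a₁) (C a₂) (C a₃) T)
    (hz : T.eval (-z) ≠ 0) :
    SV (-a₁) (-a₂) (-a₃)
      (fun x => -x * (derivative T).eval (-x) / T.eval (-x) + a₁ * a₂) z := by
  set σ : ℝ → ℝ := fun x => -x * (derivative T).eval (-x) / T.eval (-x) + a₁ * a₂ with hσ
  have deriv_σ {x : ℝ} (hx : T.eval (-x) ≠ 0) :
      deriv σ x = -((sigmaNum₁ X T).eval (-x) / T.eval (-x) ^ 2) := by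
    refine (((hasDerivAt_mul_derivative_div T hx).comp x (hasDerivAt_neg x)).add_const
      (a₁ * a₂)).deriv.trans ?_
    ring
  have eventually_ne : ∀ᶠ x in nhds z, T.eval (-x) ≠ 0 :=
    (T.continuous.comp continuous_neg).continuousAt.eventually_ne hz
  have deriv_deriv_σ : deriv (deriv σ) z = (sigmaNum₂ X T).eval (-z) / T.eval (-z) ^ 3 := by
    have deriv_σ_eventuallyEq : deriv σ =ᶠ[nhds z]
        fun x => -((sigmaNum₁ X T).eval (-x) / T.eval (-x) ^ 2) :=
      eventually_ne.mono fun x => deriv_σ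
    refine deriv_σ_eventuallyEq.deriv_eq.trans ?_
    refine ((hasDerivAt_sigmaNum₁_div T hz).comp z (hasDerivAt_neg z)).neg.deriv.trans ?_
    ring
  have tau := congrArg (eval (-z)) h
  simp only [differential_eq_derivative, eval_sub, eval_add, eval_mul, eval_pow, eval_X, eval_C,
    eval_ofNat] at tau
  rw [SV, iteratedDeriv_succ, iteratedDeriv_one, deriv_deriv_σ, deriv_σ hz, hσ]
  field_simp
  linear_combination T.eval (-z) ^ 2 * tau

end Real

/-! ### Laguerre polynomials -/

/-- The Laguerre polynomial `L_N^{(α)}` as a formal polynomial. -/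
def lagPoly (N : ℕ) (α : ℝ) : ℝ[X] :=
  ∑ k ∈ range (N + 1),
    C ((-1) ^ k * genBinom (N + α) (N - k) / k.factorial) * X ^ k

theorem genBinom_succ (x : ℝ) (j : ℕ) : genBinom x (j + 1) * (j + 1) = genBinom x j * (x - j) := by
  rw [genBinom, genBinom, prod_range_succ, Nat.factorial_succ]
  push_cast
  field_simp

section Laguerre

variable (N : ℕ) (α : ℝ)

theorem coeff_lagPoly (k : ℕ) : (lagPoly N α).coeff k =
    if k < N + 1 then (-1) ^ k * genBinom (N + α) (N - k) / k.factorial else 0 := by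
  simp only [lagPoly, finsetSum_coeff, coeff_C_mul_X_pow, sum_ite_eq, mem_range]

theorem coeff_lagPoly_succ (k : ℕ) :
    ((k : ℝ) + 1) * (k + α + 1) * (lagPoly N α).coeff (k + 1) =
      -(N - k) * (lagPoly N α).coeff k := by
  rw [coeff_lagPoly, coeff_lagPoly]
  obtain h | rfl | h := lt_trichotomy k N
  · obtain ⟨j, rfl⟩ := Nat.exists_eq_add_of_lt h
    have binom := genBinom_succ ((k + j + 1 : ℕ) + α) j
    rw [if_pos (by omega), if_pos (by omega), show k + j + 1 - (k + 1) = j by omega,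
      show k + j + 1 - k = j + 1 by omega, Nat.factorial_succ]
    push_cast at binom ⊢
    field_simp
    rw [pow_succ]
    linear_combination (-1) ^ k * binom
  · simp
  · rw [if_neg (by omega), if_neg (by omega), mul_zero, mul_zero]

theorem lagPoly_ode :
    X * (lagPoly N α)′′ + (C α + 1 - X) * (lagPoly N α)′ + C (N : ℝ) * lagPoly N α = 0 := by
  ext k
  have coeff_succ := coeff_lagPoly_succ N α k
  simp only [differential_eq_derivative, sub_mul, add_mul, one_mul, coeff_add, coeff_sub,
    coeff_C_mul, coeff_zero, coeff_derivative]
  cases k <;> simp only [coeff_X_mul, coeff_X_mul_zero, coeff_derivative] <;>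
    · push_cast at coeff_succ ⊢
      linear_combination coeff_succ

theorem coeff_lagPoly_self_ne_zero : (lagPoly N α).coeff N ≠ 0 := by
  have genBinom_zero : genBinom (N + α) 0 = 1 := by simp [genBinom]
  rw [coeff_lagPoly, if_pos N.lt_succ_self, Nat.sub_self, genBinom_zero, mul_one]
  exact div_ne_zero (pow_ne_zero N (by norm_num)) (by positivity)

theorem natDegree_lagPoly : (lagPoly N α).natDegree = N := by
  refine natDegree_eq_of_le_of_coeff_ne_zero ?_ (coeff_lagPoly_self_ne_zero N α)
  rw [natDegree_le_iff_coeff_eq_zero]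
  intro k hk
  rw [coeff_lagPoly, if_neg (by omega)]

theorem lagPoly_ne_zero : lagPoly N α ≠ 0 := fun h =>
  coeff_lagPoly_self_ne_zero N α (by rw [h, coeff_zero])

theorem lagL_eq_eval : lagL N α = fun z => (lagPoly N α).eval z := by
  funext z
  rw [lagL, if_neg (by omega), lagPoly, eval_finsetSum]
  simp only [Int.toNat_natCast, Int.cast_natCast, eval_mul, eval_C, eval_pow, eval_X]
  exact sum_congr rfl fun k _ => by ring

end Laguerre

theorem iteratedDeriv_eval (p : ℝ[X]) (k : ℕ) :
    iteratedDeriv k (fun z => p.eval z) = fun z => (derivative^[k] p).eval z := by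
  induction k with
  | zero => simp
  | succ k ih =>
    rw [iteratedDeriv_succ, ih, Function.iterate_succ_apply']
    exact funext fun z => Polynomial.deriv _

theorem genLag_eq_eval (m n : ℕ) (μ : ℝ) :
    genLag m n μ = fun z => (hankelDet (lagPoly (m + n) (μ + 1)) n).eval z := by
  funext z
  rw [genLag, ← Nat.cast_add, lagL_eq_eval, hankelDet, hankelMinor, ← coe_evalRingHom,
    RingHom.map_det]
  congr 1
  ext i j
  exact congrFun (iteratedDeriv_eval _ _) z

theorem tauForm_hankelDet_lagPoly (m n : ℕ) (α : ℝ) :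
    TauForm X (C (m + 1 : ℝ)) (C (-n : ℝ)) (C (m + n + α)) (hankelDet (lagPoly (m + n) α) n) := by
  have n_le_natDegree : n ≤ (lagPoly (m + n) α).natDegree := by
    rw [natDegree_lagPoly]
    exact n.le_add_left m
  convert tauForm_hankelDet (lagPoly_ne_zero _ α) n_le_natDegree (lagPoly_ode (m + n) α) using 3 <;>
  · push_cast
    ring

/-- rational solution of `S_V` from `T̂_{m,n}^{(μ)}(z) = T_{m,n}^{(μ)}(-z)`. -/
theorem sv_rational_solution_hat (m n : ℕ) (hn : 1 ≤ n) (μ : ℝ) (σh : ℝ → ℝ)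
    (hσh : σh = fun z =>
      z * deriv (fun t => genLag (m : ℤ) n μ (-t)) z / genLag (m : ℤ) n μ (-z)
        - ((m : ℝ) + 1) * n) :
    ∀ z : ℝ, z ≠ 0 → genLag (m : ℤ) n μ (-z) ≠ 0 →
      SV (-(m : ℝ) - 1) (n : ℝ) (-(m : ℝ) - n - μ - 1) σh z := by
  rintro z - hz
  set T := hankelDet (lagPoly (m + n) (μ + 1)) n
  have genLag_eq : genLag m n μ = fun x => T.eval x := genLag_eq_eval m n μ
  have deriv_comp_neg (x : ℝ) : deriv (fun t => T.eval (-t)) x = -(derivative T).eval (-x) := by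
    rw [deriv_comp_neg fun t => T.eval t, Polynomial.deriv]
  have σh_eq : σh = fun x => -x * (derivative T).eval (-x) / T.eval (-x) + (m + 1) * -n := by
    simp only [hσh, genLag_eq, deriv_comp_neg]
    funext x
    ring
  rw [genLag_eq] at hz
  rw [σh_eq]
  convert (tauForm_hankelDet_lagPoly m n (μ + 1)).sv hz using 1 <;> ring
end
end

section
/- Let m ≥ 0, n ≥ 1 be integers and let c_{m,n} = (−1)^{n(2m+1+n)/2} ∏_{j=1}^{n} (j−1)!/(m+j)!. Then the generalised Laguerre polynomials factorise at negative integer parameter values as follows: (i) for j = 1, …, m: T_{m,n}^{(−n−j)}(z) = (c_{m,n}/c_{m−j,n}) · z^{nj} · T_{m−j,n}^{(j−n)}(z), with T_{m−j,n}^{(j−n)}(0) ≠ 0; (ii) T_{m,n}^{(−m−n−1)}(z) = c_{m,n} · z^{n(m+1)}; (iii) for j = 2, …, n: T_{m,n}^{(−m−n−j)}(z) = (c_{m,n}/c_{m,j−1}) · z^{(m+1)(n+1−j)} · T_{m,j−1}^{(−m−n−j)}(z), with T_{m,j−1}^{(−m−n−j)}(0) ≠ 0. -/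
noncomputable section

open Finset

/-!
The generating function `L_N^{(α)}(z) = [t^N] (1 + t)^{N+α} e^{-zt}` makes `T_{m,n}^{(μ)}(z)`, up to
sign, a Toeplitz determinant in the coefficients of `(1 + t)^s e^{-zt}` with `s = m + n + μ + 1`.
For `s ∈ ℕ` the factorisation comes from the symmetry in `p`, `q` of
`q! w^p [t^q] (1 + t)^p e^{wt} = ∑ i, i! C(p, i) C(q, i) w^{p+q-i}`, which exchanges the exponent
with the position of the Toeplitz minor. For `-s ∈ ℕ`, Jacobi's complementary minor theorem replaces
the series by its reciprocal, whose exponent is `-s`. At `z = 0` what remains is a determinant of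
binomial coefficients, proportional to a Toeplitz determinant of `e^t`, hence nonzero.
-/

section Determinants

open Matrix

variable {R : Type*} [CommRing R]

lemma det_of_mul_mul {ι : Type*} [Fintype ι] [DecidableEq ι] (r c : ι → R) (A : Matrix ι ι R) :
    det (of fun j k => r j * c k * A j k) = (∏ j, r j) * (∏ k, c k) * det A := by
  simp only [mul_assoc]
  rw [← det_mul_row, ← det_mul_column]
  rfl

lemma sign_revPerm (n : ℕ) :
    Equiv.Perm.sign (Fin.revPerm : Equiv.Perm (Fin n)) = (-1) ^ n.choose 2 := by
  induction n with
  | zero => simp [Subsingleton.elim Fin.revPerm (1 : Equiv.Perm (Fin 0))]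
  | succ n ih =>
    have rotate_rev : finRotate (n + 1) * Fin.revPerm =
        Equiv.Perm.decomposeFin.symm (0, Fin.revPerm) := by
      ext i
      refine Fin.cases ?_ (fun i => ?_) i
      · simp
      · simp [Fin.rev_succ]
    have sign_eq := congrArg Equiv.Perm.sign rotate_rev
    rw [Equiv.Perm.sign_mul, sign_finRotate, Equiv.Perm.decomposeFin.symm_sign, ih, if_pos rfl,
      one_mul, Nat.succ_sub_one] at sign_eq
    rw [Nat.choose_succ_succ' n 1, Nat.choose_one_right, pow_add, ← sign_eq, ← mul_assoc,
      ← mul_pow, neg_one_mul, neg_neg, one_pow, one_mul]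

lemma det_submatrix_rev {n : ℕ} (A : Matrix (Fin n) (Fin n) R) :
    (A.submatrix id Fin.rev).det = (-1) ^ n.choose 2 * A.det := by
  refine (det_permute' Fin.revPerm A).trans ?_
  simp [sign_revPerm]

lemma val_finRotate_pow {N : ℕ} (k : ℕ) (i : Fin N) :
    ((finRotate N ^ k) i : ℕ) = (i + k) % N := by
  obtain _ | N := N
  · exact i.elim0
  induction k with
  | zero => simp [Nat.mod_eq_of_lt i.2]
  | succ k ih =>
    rw [pow_succ', Equiv.Perm.mul_apply, finRotate_apply, Fin.val_add, ih]
    simp [add_assoc]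

lemma sign_finRotate_add_pow (M n : ℕ) :
    Equiv.Perm.sign (finRotate (M + n) ^ n) = (-1) ^ (n * M) := by
  obtain _ | n := n
  · simp
  rw [map_pow, sign_finRotate, ← pow_mul,
    show (M + (n + 1) - 1) * (n + 1) = (n + 1) * M + n * (n + 1) by
      rw [← add_assoc, Nat.add_sub_cancel]; ring,
    pow_add, (Nat.even_mul_succ_self n).neg_one_pow, mul_one]

/-- Jacobi's complementary minor theorem for a pair of inverse block matrices. -/
lemma det_toBlocks₂₂_eq_of_mul_eq_one {p q : Type*} [Fintype p] [DecidableEq p] [Fintype q]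
    [DecidableEq q] {P Q : Matrix (p ⊕ q) (p ⊕ q) R} (hPQ : P * Q = 1) :
    P.toBlocks₂₂.det = P.det * Q.toBlocks₁₁.det := by
  have block_mul : P * fromBlocks Q.toBlocks₁₁ 0 Q.toBlocks₂₁ 1 =
      fromBlocks 1 P.toBlocks₁₂ 0 P.toBlocks₂₂ := by
    rw [← fromBlocks_toBlocks P, ← fromBlocks_toBlocks Q, fromBlocks_multiply,
      ← fromBlocks_one, fromBlocks_inj] at hPQ
    conv_lhs => rw [← fromBlocks_toBlocks P]
    simp [fromBlocks_multiply, hPQ.1, hPQ.2.2.1]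
  simpa [det_fromBlocks_zero₁₂, det_fromBlocks_zero₂₁] using (congrArg det block_mul).symm

end Determinants

section ToeplitzDet

open PowerSeries

variable {R : Type*} [CommRing R]

lemma coeff_mul_eq_sum_range {K i : ℕ} (hi : i < K) (F G : R⟦X⟧) :
    coeff i (F * G) = ∑ l ∈ range K, coeff l F * coeff i (X ^ l * G) := by
  rw [coeff_mul, Nat.sum_antidiagonal_eq_sum_range_succ_mk,
    ← sum_subset (range_subset_range.2 (Nat.succ_le_of_lt hi))]
  · refine sum_congr rfl fun l hl => ?_
    rw [coeff_X_pow_mul', if_pos (mem_range_succ_iff.1 hl)]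
  · intro l _ hl
    rw [coeff_X_pow_mul', if_neg (mt mem_range_succ_iff.2 hl), mul_zero]

lemma coeff_one_add_X_pow (p k : ℕ) : coeff k ((1 + X : R⟦X⟧) ^ p) = (p.choose k : R) := by
  rw [← Polynomial.coeff_one_add_X_pow, ← Polynomial.coeff_coe]
  simp

/-- Multiplication by `H` on `R⟦X⟧` modulo `X ^ N`, in the basis of powers of `X`: the lower
triangular Toeplitz matrix with entries `h_{i-j}`, where `h_l` is the `l`-th coefficient of `H`. -/
def lowerToeplitz (N : ℕ) (H : R⟦X⟧) : Matrix (Fin N) (Fin N) R :=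
  Matrix.of fun i j => coeff i (X ^ (j : ℕ) * H)

lemma lowerToeplitz_mul (N : ℕ) (H G : R⟦X⟧) :
    lowerToeplitz N (H * G) = lowerToeplitz N H * lowerToeplitz N G := by
  ext i j
  simp only [lowerToeplitz, Matrix.mul_apply, Matrix.of_apply]
  rw [show X ^ (j : ℕ) * (H * G) = X ^ (j : ℕ) * G * H by ring, coeff_mul_eq_sum_range i.2,
    ← Fin.sum_univ_eq_sum_range]
  exact sum_congr rfl fun l _ => mul_comm _ _

lemma lowerToeplitz_one (N : ℕ) : lowerToeplitz N (1 : R⟦X⟧) = 1 := by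
  ext i j
  simp [lowerToeplitz, coeff_X_pow, Matrix.one_apply, Fin.ext_iff]

lemma det_lowerToeplitz (N : ℕ) (H : R⟦X⟧) :
    (lowerToeplitz N H).det = constantCoeff H ^ N := by
  rw [Matrix.det_of_isLowerTriangular]
  · simp [lowerToeplitz, coeff_X_pow_mul']
  · intro i j hij
    have : (i : ℕ) < j := hij
    rw [lowerToeplitz, Matrix.of_apply, coeff_X_pow_mul', if_neg (by lia)]

/-- The Toeplitz determinant `det [h_{M+k-j}]_{j,k=0}^{n-1}`, where `h_l` is the `l`-th coefficient
of `H`. Multiplication by `X ^ j` encodes the shift by `j` and the convention `h_l = 0` for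
`l < 0`. -/
def toeplitzDet (n M : ℕ) (H : R⟦X⟧) : R :=
  Matrix.det (Matrix.of fun j k : Fin n => coeff (M + k) (X ^ (j : ℕ) * H))

lemma toeplitzDet_zero (n : ℕ) (H : R⟦X⟧) : toeplitzDet n 0 H = constantCoeff H ^ n := by
  rw [← det_lowerToeplitz, ← Matrix.det_transpose, toeplitzDet]
  congr 1
  ext j k
  simp [lowerToeplitz]

-- The two determinants are complementary minors of the mutually inverse matrices
-- `lowerToeplitz (M + n) H` and `lowerToeplitz (M + n) G`.
lemma toeplitzDet_eq_of_mul_eq_one (n M : ℕ) {H G : R⟦X⟧} (hHG : H * G = 1) :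
    toeplitzDet n M H = (-1) ^ (n * M) * constantCoeff H ^ (M + n) * toeplitzDet M n G := by
  let σ : Equiv.Perm (Fin (M + n)) := finRotate (M + n) ^ n
  let rows : Fin M ⊕ Fin n ≃ Fin (M + n) := finSumFinEquiv
  let cols : Fin M ⊕ Fin n ≃ Fin (M + n) := rows.trans σ
  have cols_inl (i : Fin M) : (cols (.inl i) : ℕ) = n + i := by
    simp only [cols, rows, σ, Equiv.trans_apply, finSumFinEquiv_apply_left, val_finRotate_pow,
      Fin.val_castAdd]
    rw [Nat.mod_eq_of_lt (by lia), add_comm]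
  have cols_inr (j : Fin n) : (cols (.inr j) : ℕ) = j := by
    simp only [cols, rows, σ, Equiv.trans_apply, finSumFinEquiv_apply_right, val_finRotate_pow,
      Fin.val_natAdd]
    rw [show M + (j : ℕ) + n = j + (M + n) by ring, Nat.add_mod_right, Nat.mod_eq_of_lt (by lia)]
  set P := (lowerToeplitz (M + n) H).submatrix rows cols with hP
  set Q := (lowerToeplitz (M + n) G).submatrix cols rows with hQ
  have mul_eq_one : P * Q = 1 := by
    rw [hP, hQ, Matrix.submatrix_mul_equiv, ← lowerToeplitz_mul, hHG, lowerToeplitz_one,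
      Matrix.submatrix_one_equiv]
  have det_P : P.det = (-1) ^ (n * M) * constantCoeff H ^ (M + n) := by
    have : P = ((lowerToeplitz (M + n) H).submatrix id σ).submatrix rows rows := rfl
    rw [this, Matrix.det_submatrix_equiv_self, Matrix.det_permute', det_lowerToeplitz,
      sign_finRotate_add_pow]
    simp
  have minor_P : P.toBlocks₂₂.det = toeplitzDet n M H := by
    rw [toeplitzDet, ← Matrix.det_transpose]
    congr 1
    ext j k
    simp [P, Matrix.toBlocks₂₂, lowerToeplitz, cols_inr, rows]
  have minor_Q : Q.toBlocks₁₁.det = toeplitzDet M n G := by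
    rw [toeplitzDet, ← Matrix.det_transpose]
    congr 1
    ext j k
    simp [Q, Matrix.toBlocks₁₁, lowerToeplitz, cols_inl, rows]
  rw [← minor_P, ← minor_Q, ← det_P]
  exact det_toBlocks₂₂_eq_of_mul_eq_one mul_eq_one

lemma det_choose_eq_one (n : ℕ) :
    Matrix.det (Matrix.of fun j l : Fin n => ((j : ℕ).choose l : R)) = 1 := by
  rw [Matrix.det_of_isLowerTriangular]
  · simp
  · intro j l hjl
    simp [Nat.choose_eq_zero_of_lt (show (j : ℕ) < l from hjl)]

lemma toeplitzDet_eq_det_one_add_X_pow (n M : ℕ) (H : R⟦X⟧) :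
    toeplitzDet n M H =
      Matrix.det (Matrix.of fun j k : Fin n => coeff (M + k) ((1 + X) ^ (j : ℕ) * H)) := by
  have rows_eq : (Matrix.of fun j k : Fin n => coeff (M + k) ((1 + X) ^ (j : ℕ) * H)) =
      (Matrix.of fun j l : Fin n => ((j : ℕ).choose l : R)) *
        (Matrix.of fun l k : Fin n => coeff (M + k) (X ^ (l : ℕ) * H)) := by
    ext j k
    have expand : (1 + X) ^ (j : ℕ) * H =
        ∑ l ∈ range (j + 1), C ((j : ℕ).choose l : R) * (X ^ l * H) := by
      rw [add_comm, add_pow, sum_mul]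
      refine sum_congr rfl fun l _ => ?_
      rw [map_natCast]
      ring
    simp only [Matrix.mul_apply, Matrix.of_apply, expand, map_sum, coeff_C_mul]
    rw [Fin.sum_univ_eq_sum_range
      (fun l => ((j : ℕ).choose l : R) * coeff (M + k) (X ^ l * H)) n]
    refine sum_subset (range_subset_range.2 j.2) fun l _ hl => ?_
    rw [Nat.choose_eq_zero_of_lt (by simpa using hl), Nat.cast_zero, zero_mul]
  rw [rows_eq, Matrix.det_mul, det_choose_eq_one, one_mul, toeplitzDet]

end ToeplitzDet

section RectHookProd

/-- The product of the hook lengths of the `n × M` rectangular Young diagram. -/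
def rectHookProd (n M : ℕ) : ℕ :=
  ∏ i ∈ range n, ∏ j ∈ range M, (i + j + 1)

lemma rectHookProd_comm (n M : ℕ) : rectHookProd n M = rectHookProd M n := by
  simp only [rectHookProd, prod_comm (s := range n), add_comm]

lemma rectHookProd_ne_zero (n M : ℕ) : rectHookProd n M ≠ 0 :=
  prod_ne_zero_iff.2 fun _ _ => prod_ne_zero_iff.2 fun _ _ => Nat.succ_ne_zero _

lemma prod_factorial_add (n a : ℕ) :
    ∏ i ∈ range n, (a + i).factorial = rectHookProd n a * ∏ i ∈ range n, i.factorial := by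
  rw [rectHookProd, ← prod_mul_distrib]
  refine prod_congr rfl fun i _ => ?_
  rw [add_comm a, ← Nat.factorial_mul_ascFactorial, Nat.ascFactorial_eq_prod_range, mul_comm]
  simp only [add_right_comm]

end RectHookProd

section ExpSeries

open PowerSeries

variable {K : Type*} [Field K] [CharZero K]

/-- The exponential generating series `e^{wX}`. -/
def expSeries (w : K) : K⟦X⟧ := rescale w (exp K)

lemma coeff_expSeries (w : K) (k : ℕ) : coeff k (expSeries w) = w ^ k / k.factorial := by
  simp [expSeries, coeff_rescale, coeff_exp, div_eq_mul_inv]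

lemma constantCoeff_expSeries (w : K) : constantCoeff (expSeries w) = 1 := by
  rw [← coeff_zero_eq_constantCoeff_apply, coeff_expSeries]
  simp

lemma expSeries_zero : expSeries (0 : K) = 1 := by
  simp [expSeries]

lemma expSeries_neg_mul_expSeries (w : K) : expSeries (-w) * expSeries w = 1 := by
  rw [expSeries, expSeries, exp_mul_exp_eq_exp_add, neg_add_cancel, ← expSeries, expSeries_zero]

lemma factorial_mul_pow_mul_coeff (p q : ℕ) (w : K) :
    (q.factorial : K) * w ^ p * coeff q ((1 + X) ^ p * expSeries w) =
      ∑ i ∈ range (min p q + 1), (i.factorial * p.choose i * q.choose i : K) * w ^ (p + q - i) := by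
  rw [coeff_mul, Nat.sum_antidiagonal_eq_sum_range_succ_mk, mul_sum]
  refine (sum_subset_zero_on_sdiff (range_subset_range.2 (by lia)) ?_ ?_).symm
  · intro i hi
    have : p < i := by simp only [mem_sdiff, mem_range] at hi; lia
    simp [coeff_one_add_X_pow, Nat.choose_eq_zero_of_lt this]
  · intro i hi
    have hiq : i ≤ q := by simp only [mem_range] at hi; lia
    have factorial_ne_zero : (i.factorial : K) ≠ 0 := Nat.cast_ne_zero.2 i.factorial_ne_zero
    rw [coeff_one_add_X_pow, coeff_expSeries, Nat.cast_choose K hiq, Nat.add_sub_assoc hiq,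
      pow_add]
    field_simp

lemma factorial_mul_pow_mul_coeff_comm (p q : ℕ) (w : K) :
    (q.factorial : K) * w ^ p * coeff q ((1 + X) ^ p * expSeries w) =
      p.factorial * w ^ q * coeff p ((1 + X) ^ q * expSeries w) := by
  rw [factorial_mul_pow_mul_coeff, factorial_mul_pow_mul_coeff, min_comm, add_comm p q]
  simp only [mul_right_comm]

lemma prod_factorial_mul_toeplitzDet_comm (n a b : ℕ) (w : K) :
    (∏ j ∈ range n, w ^ (a + j)) * (∏ k ∈ range n, ((b + k).factorial : K)) *
        toeplitzDet n b ((1 + X) ^ a * expSeries w) =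
      (∏ k ∈ range n, w ^ (b + k)) * (∏ j ∈ range n, ((a + j).factorial : K)) *
        toeplitzDet n a ((1 + X) ^ b * expSeries w) := by
  simp only [toeplitzDet_eq_det_one_add_X_pow, ← Fin.prod_univ_eq_prod_range, ← det_of_mul_mul]
  rw [← Matrix.det_transpose]
  congr 1
  ext k j
  simp only [Matrix.transpose_apply, Matrix.of_apply, ← mul_assoc, ← pow_add]
  rw [add_comm (j : ℕ) a, add_comm (k : ℕ) b, mul_comm (w ^ _), mul_comm (w ^ _)]
  exact factorial_mul_pow_mul_coeff_comm _ _ _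

lemma toeplitzDet_one_add_X_pow_mul_expSeries (n a d : ℕ) (w : K) :
    toeplitzDet n (a + d) ((1 + X) ^ a * expSeries w) =
      rectHookProd n a / rectHookProd n (a + d) * w ^ (n * d) *
        toeplitzDet n a ((1 + X) ^ (a + d) * expSeries w) := by
  obtain rfl | hn := Nat.eq_zero_or_pos n
  · simp [rectHookProd, toeplitzDet]
  obtain rfl | hd := Nat.eq_zero_or_pos d
  · simp [rectHookProd_ne_zero]
  obtain rfl | hw := eq_or_ne w 0
  · have det_eq_zero : toeplitzDet n (a + d) ((1 + X) ^ a * expSeries (0 : K)) = 0 := by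
      refine Matrix.det_eq_zero_of_row_eq_zero ⟨0, hn⟩ fun k => ?_
      simp [expSeries_zero, coeff_one_add_X_pow, Nat.choose_eq_zero_of_lt
        (show a < a + d + k by lia)]
    rw [det_eq_zero, zero_pow (mul_pos hn hd).ne', mul_zero, zero_mul]
  · have pow_prod : ∏ k ∈ range n, w ^ (a + d + k) =
        w ^ (n * d) * ∏ j ∈ range n, w ^ (a + j) := by
      simp only [add_right_comm a d, pow_add w _ d, prod_mul_distrib, prod_const, card_range,
        ← pow_mul, mul_comm]
    have factorial_prod (c : ℕ) : ∏ i ∈ range n, ((c + i).factorial : K) =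
        rectHookProd n c * ∏ i ∈ range n, (i.factorial : K) :=
      mod_cast prod_factorial_add n c
    have comm := prod_factorial_mul_toeplitzDet_comm n a (a + d) w
    rw [pow_prod, factorial_prod, factorial_prod] at comm
    have common_ne_zero : (∏ j ∈ range n, w ^ (a + j)) * ∏ i ∈ range n, (i.factorial : K) ≠ 0 :=
      mul_ne_zero (prod_ne_zero_iff.2 fun _ _ => pow_ne_zero _ hw)
        (prod_ne_zero_iff.2 fun i _ => Nat.cast_ne_zero.2 i.factorial_ne_zero)
    have hook_ne_zero : (rectHookProd n (a + d) : K) ≠ 0 := mod_cast rectHookProd_ne_zero n (a + d)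
    rw [div_mul_eq_mul_div, div_mul_eq_mul_div, eq_div_iff hook_ne_zero]
    refine mul_left_cancel₀ common_ne_zero ?_
    linear_combination comm

lemma toeplitzDet_expSeries (n M : ℕ) (w : K) :
    toeplitzDet n M (expSeries w) = w ^ (n * M) / rectHookProd n M := by
  have := toeplitzDet_one_add_X_pow_mul_expSeries n 0 M w
  rw [zero_add, pow_zero, one_mul, toeplitzDet_zero, map_mul, constantCoeff_expSeries] at this
  simpa [rectHookProd, div_eq_inv_mul] using this

-- Since `C(a+d+j, a+k) = (a+d+j)! / ((a+k)! (d+j-k)!)`, scaling rows and columns turns the matrix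
-- into the transpose of the one for `e^X`.
lemma toeplitzDet_one_add_X_pow_ne_zero (n a d : ℕ) :
    toeplitzDet n a ((1 + X : K⟦X⟧) ^ (a + d)) ≠ 0 := by
  have factorial_ne_zero (l : ℕ) : (l.factorial : K) ≠ 0 := Nat.cast_ne_zero.2 l.factorial_ne_zero
  have scaled : (Matrix.of fun j k : Fin n => coeff (a + k)
        ((1 + X : K⟦X⟧) ^ (j : ℕ) * (1 + X) ^ (a + d))) =
      Matrix.of fun j k : Fin n => ((a + d + j).factorial : K) * ((a + k).factorial : K)⁻¹ *
        (Matrix.of fun k j : Fin n => coeff (d + j) (X ^ (k : ℕ) * expSeries (1 : K))).transpose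
          j k := by
    ext j k
    simp only [Matrix.of_apply, Matrix.transpose_apply]
    rw [← pow_add, coeff_one_add_X_pow, coeff_X_pow_mul']
    split_ifs with hk
    · rw [coeff_expSeries, one_pow, Nat.cast_choose K (by lia), add_comm (j : ℕ),
        show a + d + j - (a + k) = d + (j : ℕ) - k by lia]
      field_simp
    · rw [Nat.choose_eq_zero_of_lt (by lia), Nat.cast_zero, mul_zero]
  rw [toeplitzDet_eq_det_one_add_X_pow, scaled, det_of_mul_mul, Matrix.det_transpose, ← toeplitzDet,
    toeplitzDet_expSeries, one_pow]
  have hook_ne_zero : (rectHookProd n d : K) ≠ 0 := mod_cast rectHookProd_ne_zero n d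
  simp [prod_ne_zero_iff, factorial_ne_zero, hook_ne_zero]

lemma hasDerivAt_coeff_expSeries {𝕜 : Type*} [NontriviallyNormedField 𝕜] [CharZero 𝕜] (q : ℕ)
    (w : 𝕜) :
    HasDerivAt (fun w => coeff q (expSeries w)) (coeff q (X * expSeries w)) w := by
  cases q with
  | zero => simpa [constantCoeff_expSeries] using hasDerivAt_const w (1 : 𝕜)
  | succ q =>
    simp only [coeff_succ_X_mul, coeff_expSeries]
    refine ((hasDerivAt_pow (q + 1) w).div_const _).congr_deriv ?_
    have succ_ne_zero : ((q + 1 : ℕ) : 𝕜) ≠ 0 := Nat.cast_ne_zero.2 q.succ_ne_zero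
    rw [Nat.factorial_succ, Nat.cast_mul, Nat.add_sub_cancel, mul_div_mul_left _ _ succ_ne_zero]

lemma hasDerivAt_coeff_mul_expSeries {𝕜 : Type*} [NontriviallyNormedField 𝕜] [CharZero 𝕜]
    (F : 𝕜⟦X⟧) (N : ℕ) (w : 𝕜) :
    HasDerivAt (fun w => coeff N (F * expSeries w)) (coeff N (X * F * expSeries w)) w := by
  rw [mul_comm X, mul_assoc]
  simp only [coeff_mul N F]
  exact HasDerivAt.fun_sum fun p _ => (hasDerivAt_coeff_expSeries p.2 w).const_mul _

lemma iteratedDeriv_coeff_mul_expSeries {𝕜 : Type*} [NontriviallyNormedField 𝕜] [CharZero 𝕜]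
    (F : 𝕜⟦X⟧) (N i : ℕ) :
    iteratedDeriv i (fun w => coeff N (F * expSeries w)) =
      fun w => coeff N (X ^ i * F * expSeries w) := by
  induction i with
  | zero => simp
  | succ i ih =>
    funext w
    rw [iteratedDeriv_succ, ih, (hasDerivAt_coeff_mul_expSeries _ N w).deriv, pow_succ',
      mul_assoc X (X ^ i)]

end ExpSeries

section Laguerre

open PowerSeries hiding binomialSeries

lemma genBinom_eq_ringChoose (x : ℝ) (k : ℕ) : genBinom x k = Ring.choose x k := by
  rw [Ring.choose_eq_smul, genBinom, ← Polynomial.aeval_eq_smeval, ← Polynomial.eval_map_algebraMap,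
    descPochhammer_map, descPochhammer_eval_eq_prod_range, smul_eq_mul, div_eq_inv_mul]

lemma lagL_natCast (N : ℕ) (α z : ℝ) :
    lagL N α z = coeff N (PowerSeries.binomialSeries ℝ (N + α) * expSeries (-z)) := by
  rw [mul_comm, coeff_mul, Nat.sum_antidiagonal_eq_sum_range_succ_mk, lagL,
    if_neg (Int.natCast_nonneg N).not_gt]
  refine sum_congr rfl fun k _ => ?_
  rw [genBinom_eq_ringChoose, coeff_expSeries, binomialSeries_coeff, neg_pow z]
  simp only [Int.cast_natCast, Int.toNat_natCast, smul_eq_mul]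
  ring

lemma iteratedDeriv_lagL_natCast (N i : ℕ) (α z : ℝ) :
    iteratedDeriv i (lagL N α) z =
      (-1) ^ i * coeff N (X ^ i * PowerSeries.binomialSeries ℝ (N + α) * expSeries (-z)) := by
  rw [funext (lagL_natCast N α), iteratedDeriv_comp_neg i fun w =>
      coeff N (PowerSeries.binomialSeries ℝ (N + α) * expSeries w),
    iteratedDeriv_coeff_mul_expSeries, smul_eq_mul]

lemma genLag_eq_toeplitzDet (m n : ℕ) (μ z : ℝ) :
    genLag m n μ z = (-1) ^ n.choose 2 *
      toeplitzDet n (m + 1) (PowerSeries.binomialSeries ℝ (m + n + μ + 1) * expSeries (-z)) := by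
  set H := PowerSeries.binomialSeries ℝ (m + n + μ + 1) * expSeries (-z) with hH
  have entries : (Matrix.of fun j k : Fin n =>
      iteratedDeriv ((j : ℕ) + (k : ℕ)) (lagL (m + n) (μ + 1)) z) =
      Matrix.of fun j k : Fin n => (-1 : ℝ) ^ (j : ℕ) * (-1) ^ (k : ℕ) *
        (Matrix.of fun j k : Fin n => coeff (m + 1 + k) (X ^ (j : ℕ) * H)).submatrix id Fin.rev
          j k := by
    ext j k
    have index_eq : m + n = m + 1 + (Fin.rev k : ℕ) + k := by rw [Fin.val_rev]; lia
    rw [Matrix.of_apply, ← Nat.cast_add, iteratedDeriv_lagL_natCast, Nat.cast_add, ← add_assoc,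
      pow_add, mul_assoc (X ^ _), ← hH, pow_add, mul_comm (X ^ (j : ℕ)), mul_assoc (X ^ (k : ℕ)),
      index_eq, coeff_X_pow_mul]
    rfl
  rw [genLag, entries, det_of_mul_mul, det_submatrix_rev, ← toeplitzDet, ← prod_mul_distrib]
  simp [← mul_pow]

lemma genLag_of_add_eq_natCast {m n r : ℕ} {μ : ℝ} (hr : m + n + μ + 1 = r) (z : ℝ) :
    genLag m n μ z =
      (-1) ^ n.choose 2 * toeplitzDet n (m + 1) ((1 + X) ^ r * expSeries (-z)) := by
  rw [genLag_eq_toeplitzDet, hr, binomialSeries_nat]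

lemma genLag_of_add_eq_neg_natCast {m n r : ℕ} {μ : ℝ} (hr : m + n + μ + 1 = -r) (z : ℝ) :
    genLag m n μ z = (-1) ^ (n.choose 2 + n * (m + 1)) *
      toeplitzDet (m + 1) n ((1 + X) ^ r * expSeries z) := by
  have mul_eq_one : (PowerSeries.binomialSeries ℝ (-r : ℝ) * expSeries (-z)) *
      ((1 + X) ^ r * expSeries z) = 1 := by
    rw [mul_mul_mul_comm, expSeries_neg_mul_expSeries, ← binomialSeries_nat (R := ℝ),
      ← binomialSeries_add, neg_add_cancel, binomialSeries_zero, one_mul]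
  rw [genLag_eq_toeplitzDet, hr, toeplitzDet_eq_of_mul_eq_one _ _ mul_eq_one, map_mul,
    constantCoeff_expSeries, binomialSeries_constantCoeff, mul_one, one_pow, mul_one, ← mul_assoc,
    ← pow_add]

lemma cmn_eq_div_rectHookProd (m n : ℕ) :
    cmn m n = (-1) ^ (n.choose 2 + n * (m + 1)) / rectHookProd n (m + 1) := by
  have exponent : n * (2 * m + 1 + n) / 2 = n.choose 2 + n * (m + 1) := by
    have split : n * (2 * m + 1 + n) = n * (n - 1) + 2 * (n * (m + 1)) := by
      obtain _ | n := n
      · simp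
      · rw [Nat.add_sub_cancel]
        ring
    rw [split, Nat.add_mul_div_left _ _ two_pos, Nat.choose_two_right]
  have quotient : ∏ j ∈ range n, (j.factorial : ℝ) / (m + j + 1).factorial =
      1 / rectHookProd n (m + 1) := by
    have factorial_prod : ∏ j ∈ range n, ((m + 1 + j).factorial : ℝ) =
        rectHookProd n (m + 1) * ∏ j ∈ range n, (j.factorial : ℝ) :=
      mod_cast prod_factorial_add n (m + 1)
    simp only [prod_div_distrib, add_right_comm m _ 1, factorial_prod]
    have : ∏ j ∈ range n, (j.factorial : ℝ) ≠ 0 := prod_ne_zero_iff.2 fun _ _ => by positivity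
    field_simp
  rw [cmn, exponent, quotient, mul_one_div]

lemma cmn_add_left_div_cmn (m j n : ℕ) :
    cmn (m + j) n / cmn m n =
      (-1) ^ (n * j) * (rectHookProd n (m + 1) / rectHookProd n (m + 1 + j)) := by
  rw [cmn_eq_div_rectHookProd, cmn_eq_div_rectHookProd, add_right_comm m j, mul_add n, ← add_assoc,
    pow_add _ _ (n * j)]
  have sign_ne_zero : (-1 : ℝ) ^ (n.choose 2 + n * (m + 1)) ≠ 0 := by simp
  field_simp

lemma genLag_neg_sub_natCast (m n j : ℕ) (z : ℝ) :
    genLag (m + j : ℕ) n (-n - j) z =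
      cmn (m + j) n / cmn m n * z ^ (n * j) * genLag m n (j - n) z := by
  rw [genLag_of_add_eq_natCast (r := m + 1) (by push_cast; ring),
    genLag_of_add_eq_natCast (r := m + 1 + j) (by push_cast; ring), add_right_comm m j,
    toeplitzDet_one_add_X_pow_mul_expSeries, cmn_add_left_div_cmn, neg_pow z]
  ring

lemma genLag_neg_sub_sub_one (m n : ℕ) (z : ℝ) :
    genLag m n (-m - n - 1) z = cmn m n * z ^ (n * (m + 1)) := by
  rw [genLag_of_add_eq_natCast (r := 0) (by push_cast; ring), pow_zero, one_mul,
    toeplitzDet_expSeries, cmn_eq_div_rectHookProd, neg_pow z]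
  ring

lemma genLag_neg_sub_sub_natCast (m r d : ℕ) (z : ℝ) :
    genLag m (r + d) (-m - (r + d : ℕ) - (r + 1 : ℕ)) z =
      cmn m (r + d) / cmn m r * z ^ ((m + 1) * d) *
        genLag m r (-m - (r + d : ℕ) - (r + 1 : ℕ)) z := by
  have sign_ne_zero : (-1 : ℝ) ^ (r.choose 2 + r * (m + 1)) ≠ 0 := by simp
  rw [genLag_of_add_eq_neg_natCast (r := r) (by push_cast; ring),
    genLag_of_add_eq_neg_natCast (r := r + d) (by push_cast; ring),
    toeplitzDet_one_add_X_pow_mul_expSeries, cmn_eq_div_rectHookProd, cmn_eq_div_rectHookProd,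
    rectHookProd_comm (m + 1), rectHookProd_comm (m + 1)]
  field_simp

lemma genLag_zero_ne_zero_of_add_eq_natCast {m n d : ℕ} {μ : ℝ}
    (h : m + n + μ + 1 = (m + 1 + d : ℕ)) : genLag m n μ 0 ≠ 0 := by
  rw [genLag_of_add_eq_natCast h, neg_zero, expSeries_zero, mul_one]
  exact mul_ne_zero (pow_ne_zero _ (by norm_num)) (toeplitzDet_one_add_X_pow_ne_zero _ _ _)

lemma genLag_zero_ne_zero_of_add_eq_neg_natCast {m n d : ℕ} {μ : ℝ}
    (h : m + n + μ + 1 = -(n + d : ℕ)) : genLag m n μ 0 ≠ 0 := by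
  rw [genLag_of_add_eq_neg_natCast h, expSeries_zero, mul_one]
  exact mul_ne_zero (pow_ne_zero _ (by norm_num)) (toeplitzDet_one_add_X_pow_ne_zero _ _ _)

end Laguerre

/-- factorisation of `T_{m,n}^{(μ)}` at negative integer parameter values. -/
theorem genLag_factorisation (m n : ℕ) (hn : 1 ≤ n) :
    (∀ j : ℕ, 1 ≤ j → j ≤ m →
      (∀ z : ℝ, genLag (m : ℤ) n (-(n : ℝ) - j) z
          = (cmn m n / cmn (m - j) n) * z ^ (n * j) *
              genLag ((m : ℤ) - j) n ((j : ℝ) - n) z)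
        ∧ genLag ((m : ℤ) - j) n ((j : ℝ) - n) 0 ≠ 0)
    ∧ (∀ z : ℝ, genLag (m : ℤ) n (-(m : ℝ) - n - 1) z = cmn m n * z ^ (n * (m + 1)))
    ∧ (∀ j : ℕ, 2 ≤ j → j ≤ n →
      (∀ z : ℝ, genLag (m : ℤ) n (-(m : ℝ) - n - j) z
          = (cmn m n / cmn m (j - 1)) * z ^ ((m + 1) * (n + 1 - j)) *
              genLag (m : ℤ) (j - 1) (-(m : ℝ) - n - j) z)
        ∧ genLag (m : ℤ) (j - 1) (-(m : ℝ) - n - j) 0 ≠ 0) := by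
  refine ⟨fun j _ hjm => ?_, genLag_neg_sub_sub_one m n, fun j hj hjn => ?_⟩
  · obtain ⟨a, rfl⟩ := Nat.exists_eq_add_of_le' hjm
    rw [Nat.add_sub_cancel, Nat.cast_add, add_sub_cancel_right, ← Nat.cast_add]
    exact ⟨genLag_neg_sub_natCast a n j,
      genLag_zero_ne_zero_of_add_eq_natCast (d := j) (by push_cast; ring)⟩
  · obtain ⟨r, rfl⟩ := Nat.exists_eq_add_of_le' (one_le_two.trans hj)
    obtain ⟨d, rfl⟩ := Nat.exists_eq_add_of_le (Nat.le_of_succ_le hjn)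
    rw [Nat.add_sub_cancel, add_right_comm r d 1, Nat.add_sub_cancel_left]
    exact ⟨genLag_neg_sub_sub_natCast m r d,
      genLag_zero_ne_zero_of_add_eq_neg_natCast (d := d) (by push_cast; ring)⟩
end
end
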